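/- For every generalised Heisenberg group G (i.e. every finitely generated torsion-free 2-step nilpotent group with infinite cyclic derived-subgroup isolator), there exist an automorphism ψ of G and a natural number k such that gr_{ψ,G}(n) ≃ n^k · ln(n). -/

import Mathlib

/-- Word norm with respect to a finite generating set (inverses of generators allowed). -/
noncomputable def wordNorm {G : Type*} [Group G] (S : Finset G) (g : G) : ℕ :=
  sInf {n | ∃ l : List G, l.length = n ∧ (∀ x ∈ l, x ∈ S ∨ x⁻¹ ∈ S) ∧ l.prod = g}

/-- `x` and `y` are `ψ`-twisted conjugate. -/
def TwistedConj {G : Type*} [Group G] (ψ : G ≃* G) (x y : G) : Prop :=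
  ∃ g : G, g * x * (ψ g)⁻¹ = y

/-- The twisted conjugacy growth function: number of `ψ`-twisted conjugacy classes
with a representative of word norm at most `n`. -/
noncomputable def twistedGrowth {G : Type*} [Group G] (ψ : G ≃* G) (S : Finset G) (n : ℕ) : ℕ :=
  Set.ncard ((fun x => {y | TwistedConj ψ x y}) '' {g : G | wordNorm S g ≤ n})

def GrowthLE (f g : ℕ → ℝ) : Prop :=
  ∃ c : ℕ, 0 < c ∧ ∀ n : ℕ, max 1 (f n) ≤ c * max 1 (g (c * n))

def GrowthEquiv (f g : ℕ → ℝ) : Prop := GrowthLE f g ∧ GrowthLE g f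

/-!
Let `G` be a central extension of a lattice `M` by the isolator `ℤ`, and let `ω` be the commutator
form on `M`, a nonzero alternating form. Take `u`, `v` with `d = ω u v ≠ 0` of minimal absolute
value. Then `M` is the direct sum of the plane spanned by `u`, `v` and its `ω`-orthogonal
complement, and `G` can be written as `M × ℤ` with a cocycle for which these summands are
orthogonal. Hence the involution of `M` that fixes the plane and negates the complement lifts to an
automorphism `ψ` of `G` that fixes the isolator.

The `ψ`-twisted conjugacy class of an element is determined by its plane coordinates `(a, b)`, its
complementary coordinates modulo `2` and a quadratically corrected central coordinate modulo
`2 * d * gcd a b`. In the ball of radius `n` the plane coordinates are `O(n)` and the central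
coordinate is `O(n ^ 2)`, so the number of classes is comparable to `n ^ 2` (from `a = b = 0`) plus
the sum of `gcd a b` over a square of side comparable to `n`. As `gcd a b` is the sum of `φ d` over
the common divisors `d`, the latter sum is comparable to `∑ d ≤ n, φ d * (n / d) ^ 2`, which has
order `n ^ 2 * log n`.
-/

section GcdSums

open Finset
open scoped Nat

lemma eq_sum_totient_of_mem_Ioc {k n : ℕ} (hk : k ∈ Ioc 0 n) :
    k = ∑ d ∈ Ioc 0 n with d ∣ k, φ d := by
  have hk' := mem_Ioc.mp hk
  have h_divisors : {d ∈ Ioc 0 n | d ∣ k} = k.divisors := by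
    ext d
    simp only [mem_filter, mem_Ioc, Nat.mem_divisors]
    exact ⟨fun h ↦ ⟨h.2, hk'.1.ne'⟩, fun h ↦ ⟨⟨Nat.pos_of_dvd_of_pos h.1 hk'.1,
      (Nat.le_of_dvd hk'.1 h.1).trans hk'.2⟩, h.1⟩⟩
  rw [h_divisors, Nat.sum_totient]

lemma sum_totient_mul_div (n : ℕ) : ∑ d ∈ Ioc 0 n, φ d * (n / d) = ∑ k ∈ Ioc 0 n, k := by
  calc ∑ d ∈ Ioc 0 n, φ d * (n / d)
      = ∑ d ∈ Ioc 0 n, ∑ k ∈ Ioc 0 n, if d ∣ k then φ d else 0 := by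
        refine sum_congr rfl fun d _ ↦ ?_
        rw [← sum_filter, sum_const, Nat.Ioc_filter_dvd_card_eq_div, smul_eq_mul, mul_comm]
    _ = ∑ k ∈ Ioc 0 n, ∑ d ∈ Ioc 0 n with d ∣ k, φ d := by
        rw [sum_comm]
        simp only [sum_filter]
    _ = ∑ k ∈ Ioc 0 n, k := sum_congr rfl fun k hk ↦ (eq_sum_totient_of_mem_Ioc hk).symm

lemma sum_gcd_eq_sum_totient_mul_sq (n : ℕ) :
    ∑ q ∈ Ioc 0 n ×ˢ Ioc 0 n, q.1.gcd q.2 = ∑ d ∈ Ioc 0 n, φ d * (n / d) ^ 2 := by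
  have h_gcd_mem : ∀ q ∈ Ioc 0 n ×ˢ Ioc 0 n, q.1.gcd q.2 ∈ Ioc 0 n := fun q hq ↦ by
    simp only [mem_product, mem_Ioc] at hq ⊢
    exact ⟨Nat.gcd_pos_of_pos_left _ hq.1.1, (Nat.gcd_le_left _ hq.1.1).trans hq.1.2⟩
  calc ∑ q ∈ Ioc 0 n ×ˢ Ioc 0 n, q.1.gcd q.2
      = ∑ q ∈ Ioc 0 n ×ˢ Ioc 0 n, ∑ d ∈ Ioc 0 n, if d ∣ q.1 ∧ d ∣ q.2 then φ d else 0 := by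
        refine sum_congr rfl fun q hq ↦ (eq_sum_totient_of_mem_Ioc (h_gcd_mem q hq)).trans ?_
        simp only [sum_filter, Nat.dvd_gcd_iff]
    _ = ∑ d ∈ Ioc 0 n, φ d * (n / d) ^ 2 := by
        rw [sum_comm]
        refine sum_congr rfl fun d _ ↦ ?_
        rw [← sum_filter, sum_const, filter_product (d ∣ ·) (d ∣ ·), card_product,
          Nat.Ioc_filter_dvd_card_eq_div, smul_eq_mul]
        ring

lemma filter_mul_le_eq_Ioc_div {n d : ℕ} (hd : 0 < d) :
    {j ∈ Ioc 0 n | j * d ≤ n} = Ioc 0 (n / d) := by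
  ext j
  simp only [mem_filter, mem_Ioc, Nat.le_div_iff_mul_le hd]
  exact ⟨fun h ↦ ⟨h.1.1, h.2⟩, fun h ↦ ⟨⟨h.1, (Nat.le_mul_of_pos_right j hd).trans h.2⟩, h.2⟩⟩

/- Writing one factor `n / d` as the number of `j` with `j * d ≤ n` reduces the sum of
`φ d * (n / d) ^ 2` to the sums `∑ d, φ d * (N / d)` with `N = n / j`. -/
lemma sum_mul_sum_Ioc_div_le_sum_gcd (n : ℕ) :
    ∑ j ∈ Ioc 0 n, j * ∑ k ∈ Ioc 0 (n / j), k ≤ ∑ q ∈ Ioc 0 n ×ˢ Ioc 0 n, q.1.gcd q.2 := by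
  have h_div : ∀ j d, j * (n / j / d) ≤ n / d := fun j d ↦ by
    rw [Nat.div_div_eq_div_mul, mul_comm j d, ← Nat.div_div_eq_div_mul]
    exact Nat.mul_div_le _ _
  calc ∑ j ∈ Ioc 0 n, j * ∑ k ∈ Ioc 0 (n / j), k
      = ∑ j ∈ Ioc 0 n, ∑ d ∈ Ioc 0 (n / j), φ d * (j * (n / j / d)) := by
        simp only [← sum_totient_mul_div, mul_sum, mul_left_comm]
    _ ≤ ∑ j ∈ Ioc 0 n, ∑ d ∈ Ioc 0 (n / j), φ d * (n / d) := by
        gcongr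
        exact h_div _ _
    _ = ∑ d ∈ Ioc 0 n, ∑ j ∈ Ioc 0 n with j * d ≤ n, φ d * (n / d) := by
        rw [sum_congr rfl fun j hj ↦ by rw [← filter_mul_le_eq_Ioc_div (mem_Ioc.mp hj).1]]
        simp only [sum_filter]
        rw [sum_comm]
        simp only [mul_comm]
    _ = ∑ d ∈ Ioc 0 n, φ d * (n / d) ^ 2 := by
        refine sum_congr rfl fun d hd ↦ ?_
        rw [sum_const, filter_mul_le_eq_Ioc_div (mem_Ioc.mp hd).1, Nat.card_Ioc, Nat.sub_zero,
          smul_eq_mul]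
        ring
    _ = ∑ q ∈ Ioc 0 n ×ˢ Ioc 0 n, q.1.gcd q.2 := (sum_gcd_eq_sum_totient_mul_sq n).symm

lemma two_mul_sum_Ioc_id (n : ℕ) : 2 * ∑ k ∈ Ioc 0 n, k = n * (n + 1) := by
  induction n with
  | zero => rfl
  | succ n ih =>
    rw [sum_Ioc_succ_top n.zero_le, mul_add, ih]
    ring

lemma sum_inv_Ioc_eq_harmonic (n : ℕ) : ∑ d ∈ Ioc 0 n, (d : ℝ)⁻¹ = harmonic n := by
  rw [harmonic_eq_sum_Icc]
  push_cast
  rfl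

lemma sq_mul_log_le_sum_gcd (n : ℕ) :
    (n : ℝ) ^ 2 * Real.log n ≤ 4 * (∑ q ∈ Ioc 0 n ×ˢ Ioc 0 n, q.1.gcd q.2 : ℕ) := by
  have h_term : ∀ j ∈ Ioc 0 n, (n : ℝ) ^ 2 * (j : ℝ)⁻¹ ≤
      4 * (j * ∑ k ∈ Ioc 0 (n / j), k : ℕ) := fun j hj ↦ by
    obtain ⟨hj, hjn⟩ := mem_Ioc.mp hj
    have h_pos : 1 ≤ n / j := (Nat.one_le_div_iff hj).mpr hjn
    have h_lt : n ≤ j * (n / j + 1) := (Nat.lt_mul_div_succ n hj).le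
    have h_sq : n ^ 2 ≤ j * (4 * (j * ∑ k ∈ Ioc 0 (n / j), k)) := by
      calc n ^ 2 ≤ (j * (n / j + 1)) * (j * (n / j + 1)) := by rw [sq]; gcongr
        _ ≤ (j * (n / j + n / j)) * (j * (n / j + 1)) := by gcongr
        _ = j * (2 * j * (n / j * (n / j + 1))) := by ring
        _ = j * (4 * (j * ∑ k ∈ Ioc 0 (n / j), k)) := by rw [← two_mul_sum_Ioc_id]; ring
    rw [← div_eq_mul_inv, div_le_iff₀' (by positivity)]
    exact_mod_cast h_sq
  have h_log : Real.log n ≤ harmonic n := by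
    rcases n.eq_zero_or_pos with rfl | hn
    · simp
    · exact (Real.log_le_log (by positivity) (by simp)).trans (log_add_one_le_harmonic n)
  calc (n : ℝ) ^ 2 * Real.log n
      ≤ ∑ j ∈ Ioc 0 n, (n : ℝ) ^ 2 * (j : ℝ)⁻¹ := by
        rw [← mul_sum, sum_inv_Ioc_eq_harmonic]
        gcongr
    _ ≤ 4 * (∑ j ∈ Ioc 0 n, j * ∑ k ∈ Ioc 0 (n / j), k : ℕ) := by
        rw [Nat.cast_sum, mul_sum]
        exact sum_le_sum h_term
    _ ≤ 4 * (∑ q ∈ Ioc 0 n ×ˢ Ioc 0 n, q.1.gcd q.2 : ℕ) := by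
        gcongr
        exact sum_mul_sum_Ioc_div_le_sum_gcd n

lemma card_Icc_neg_filter_dvd_le {N d : ℕ} (hd : 0 < d) :
    #{a ∈ Icc (-N : ℤ) N | (d : ℤ) ∣ a} ≤ 2 * (N / d) + 1 := by
  have h_subset : {a ∈ Icc (-N : ℤ) N | (d : ℤ) ∣ a} ⊆
      (Icc (-(N / d : ℕ) : ℤ) (N / d : ℕ)).image ((d : ℤ) * ·) := fun a ha ↦ by
    simp only [mem_filter, mem_Icc, mem_image] at ha ⊢
    obtain ⟨⟨h_lower, h_upper⟩, k, rfl⟩ := ha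
    have hd' : (0 : ℤ) < d := mod_cast hd
    have h_le : k ≤ (N : ℤ) / d := (Int.le_ediv_iff_mul_le hd').mpr (by linarith)
    have h_neg_le : -k ≤ (N : ℤ) / d := (Int.le_ediv_iff_mul_le hd').mpr (by linarith)
    push_cast
    exact ⟨k, ⟨by linarith, h_le⟩, rfl⟩
  refine (card_le_card h_subset).trans (card_image_le.trans ?_)
  rw [Int.card_Icc]
  omega

lemma int_gcd_le_sum_totient {N : ℕ} {a b : ℤ} (ha : a ∈ Icc (-N : ℤ) N)
    (hb : b ∈ Icc (-N : ℤ) N) :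
    Int.gcd a b ≤ ∑ d ∈ Ioc 0 N, if (d : ℤ) ∣ a ∧ (d : ℤ) ∣ b then φ d else 0 := by
  rcases (Int.gcd a b).eq_zero_or_pos with h_zero | h_pos
  · simp [h_zero]
  have h_le : Int.gcd a b ≤ N := by
    rw [mem_Icc] at ha hb
    rcases Int.gcd_pos_iff.mp h_pos with h | h
    · have := Int.gcd_le_natAbs_left b h
      omega
    · have := Int.gcd_le_natAbs_right a h
      omega
  refine ((eq_sum_totient_of_mem_Ioc (mem_Ioc.mpr ⟨h_pos, h_le⟩)).trans ?_).le
  simp only [sum_filter, Int.dvd_gcd_iff]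

lemma sum_int_gcd_le_sum_totient_mul_sq (N : ℕ) :
    ∑ q ∈ Icc (-N : ℤ) N ×ˢ Icc (-N : ℤ) N, Int.gcd q.1 q.2 ≤
      ∑ d ∈ Ioc 0 N, φ d * (2 * (N / d) + 1) ^ 2 := by
  calc ∑ q ∈ Icc (-N : ℤ) N ×ˢ Icc (-N : ℤ) N, Int.gcd q.1 q.2
      ≤ ∑ q ∈ Icc (-N : ℤ) N ×ˢ Icc (-N : ℤ) N, ∑ d ∈ Ioc 0 N,
          if (d : ℤ) ∣ q.1 ∧ (d : ℤ) ∣ q.2 then φ d else 0 := by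
        refine sum_le_sum fun q hq ↦ ?_
        exact int_gcd_le_sum_totient (mem_product.mp hq).1 (mem_product.mp hq).2
    _ ≤ ∑ d ∈ Ioc 0 N, φ d * (2 * (N / d) + 1) ^ 2 := by
        rw [sum_comm]
        refine sum_le_sum fun d hd ↦ ?_
        rw [← sum_filter, sum_const, filter_product ((d : ℤ) ∣ ·) ((d : ℤ) ∣ ·), card_product,
          smul_eq_mul, mul_comm, sq]
        gcongr <;> exact card_Icc_neg_filter_dvd_le (mem_Ioc.mp hd).1

lemma sum_int_gcd_le_sq_mul_log (N : ℕ) :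
    ((∑ q ∈ Icc (-N : ℤ) N ×ˢ Icc (-N : ℤ) N, Int.gcd q.1 q.2 : ℕ) : ℝ) ≤
      9 * ((N : ℝ) ^ 2 * (1 + Real.log N)) := by
  have h_term : ∀ d ∈ Ioc 0 N,
      ((φ d * (2 * (N / d) + 1) ^ 2 : ℕ) : ℝ) ≤ 9 * ((N : ℝ) ^ 2 * (d : ℝ)⁻¹) := fun d hd ↦ by
    obtain ⟨hd, hdN⟩ := mem_Ioc.mp hd
    have h_pos : 1 ≤ N / d := (Nat.one_le_div_iff hd).mpr hdN
    calc ((φ d * (2 * (N / d) + 1) ^ 2 : ℕ) : ℝ)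
        ≤ ((d * (3 * (N / d)) ^ 2 : ℕ) : ℝ) := by
          gcongr
          · exact Nat.totient_le d
          · omega
      _ ≤ d * (3 * (N / d : ℝ)) ^ 2 := by
          push_cast
          gcongr
          exact Nat.cast_div_le
      _ = 9 * ((N : ℝ) ^ 2 * (d : ℝ)⁻¹) := by
          field_simp
          ring
  calc ((∑ q ∈ Icc (-N : ℤ) N ×ˢ Icc (-N : ℤ) N, Int.gcd q.1 q.2 : ℕ) : ℝ)
      ≤ ((∑ d ∈ Ioc 0 N, φ d * (2 * (N / d) + 1) ^ 2 : ℕ) : ℝ) :=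
        mod_cast sum_int_gcd_le_sum_totient_mul_sq N
    _ ≤ ∑ d ∈ Ioc 0 N, 9 * ((N : ℝ) ^ 2 * (d : ℝ)⁻¹) := by
        rw [Nat.cast_sum]
        exact sum_le_sum h_term
    _ ≤ 9 * ((N : ℝ) ^ 2 * (1 + Real.log N)) := by
        rw [← mul_sum, ← mul_sum, sum_inv_Ioc_eq_harmonic]
        gcongr
        exact harmonic_le_one_add_log N

end GcdSums

section Growth

lemma GrowthLE.of_le_mul {f g : ℕ → ℝ} (hg : Monotone g) (C K : ℕ)
    (h : ∀ n, f n ≤ C * max 1 (g (K * n))) : GrowthLE f g := by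
  refine ⟨C + K + 1, by omega, fun n ↦ ?_⟩
  have h_one : (1 : ℝ) ≤ max 1 (g ((C + K + 1) * n)) := le_max_left _ _
  have h_scale : g (K * n) ≤ g ((C + K + 1) * n) := hg (Nat.mul_le_mul_right n (by omega))
  refine max_le (one_le_mul_of_one_le_of_one_le (by norm_cast; omega) h_one) ((h n).trans ?_)
  gcongr
  omega

lemma monotone_pow_mul_log (k : ℕ) : Monotone fun n : ℕ ↦ (n : ℝ) ^ k * Real.log n := by
  intro m n hmn
  rcases m.eq_zero_or_pos with rfl | hm
  · simpa using mul_nonneg (pow_nonneg n.cast_nonneg k) (Real.log_natCast_nonneg n)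
  · dsimp only
    gcongr

lemma one_le_log_of_three_le {n : ℕ} (hn : 3 ≤ n) : 1 ≤ Real.log n := by
  rw [Real.le_log_iff_exp_le (by positivity)]
  exact Real.exp_one_lt_three.le.trans (mod_cast hn)

lemma GrowthLE.of_le_pow_mul_one_add_log {f : ℕ → ℝ} {k : ℕ} (C K : ℕ)
    (h : ∀ n : ℕ, f n ≤ C * (1 + ((K * n : ℕ) : ℝ) ^ k * (1 + Real.log (K * n : ℕ)))) :
    GrowthLE f fun n ↦ (n : ℝ) ^ k * Real.log n := by
  refine .of_le_mul (monotone_pow_mul_log k) (3 * C) (3 * K) fun n ↦ (h n).trans ?_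
  rw [mul_comm 3 C, Nat.cast_mul C, mul_assoc (C : ℝ), mul_assoc 3 K]
  gcongr
  generalize K * n = N
  set M : ℝ := max 1 (((3 * N : ℕ) : ℝ) ^ k * Real.log (3 * N : ℕ))
  have h_one : 1 ≤ M := le_max_left _ _
  rcases N.eq_zero_or_pos with rfl | hN
  · have h_zero : ((0 : ℕ) : ℝ) ^ k * (1 + Real.log (0 : ℕ)) ≤ 1 := by
      simpa using pow_le_one₀ le_rfl zero_le_one
    push_cast at h_zero ⊢
    linarith
  have h_log : (1 : ℝ) ≤ Real.log (3 * N : ℕ) := one_le_log_of_three_le (by omega)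
  calc 1 + (N : ℝ) ^ k * (1 + Real.log N)
      ≤ 1 + ((3 * N : ℕ) : ℝ) ^ k * (Real.log (3 * N : ℕ) + Real.log (3 * N : ℕ)) := by
        gcongr <;> omega
    _ = 1 + 2 * (((3 * N : ℕ) : ℝ) ^ k * Real.log (3 * N : ℕ)) := by ring
    _ ≤ M + 2 * M := by
        gcongr
        exact le_max_right _ _
    _ = (3 : ℕ) * M := by push_cast; ring

end Growth

section WordNorm

variable {G : Type*} [Group G] {S : Finset G}

lemma finite_generators_or_inv (S : Finset G) : {x : G | x ∈ S ∨ x⁻¹ ∈ S}.Finite :=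
  S.finite_toSet.union S.finite_toSet.inv

lemma exists_abs_le_on_generators (S : Finset G) (f : G → ℤ) :
    ∃ K : ℕ, ∀ x, (x ∈ S ∨ x⁻¹ ∈ S) → |f x| ≤ K := by
  obtain ⟨K, hK⟩ := ((finite_generators_or_inv S).image fun x ↦ (f x).natAbs).bddAbove
  refine ⟨K, fun x hx ↦ ?_⟩
  rw [Int.abs_eq_natAbs]
  exact mod_cast hK (Set.mem_image_of_mem _ hx)

lemma wordNorm_prod_le {l : List G} (hl : ∀ x ∈ l, x ∈ S ∨ x⁻¹ ∈ S) :
    wordNorm S l.prod ≤ l.length :=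
  Nat.sInf_le ⟨l, rfl, hl, rfl⟩

lemma wordNorm_one : wordNorm S (1 : G) = 0 :=
  Nat.le_zero.mp (wordNorm_prod_le (l := []) (by simp))

lemma wordNorm_le_one {x : G} (hx : x ∈ S ∨ x⁻¹ ∈ S) : wordNorm S x ≤ 1 := by
  simpa using wordNorm_prod_le (l := [x]) (by simpa using hx)

lemma exists_list_length_eq_wordNorm (hS : Subgroup.closure (S : Set G) = ⊤) (g : G) :
    ∃ l : List G, l.length = wordNorm S g ∧ (∀ x ∈ l, x ∈ S ∨ x⁻¹ ∈ S) ∧ l.prod = g := by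
  have hg : g ∈ Submonoid.closure ((S : Set G) ∪ (S : Set G)⁻¹) := by
    rw [← Subgroup.closure_toSubmonoid, hS]
    trivial
  obtain ⟨l, hl, h_prod⟩ := Submonoid.exists_list_of_mem_closure hg
  exact Nat.sInf_mem (s := {n | ∃ l : List G, l.length = n ∧ (∀ x ∈ l, x ∈ S ∨ x⁻¹ ∈ S) ∧
    l.prod = g}) ⟨l.length, l, rfl, hl, h_prod⟩

lemma wordNorm_mul_le (hS : Subgroup.closure (S : Set G) = ⊤) (g h : G) :
    wordNorm S (g * h) ≤ wordNorm S g + wordNorm S h := by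
  obtain ⟨l, hl_length, hl, hl_prod⟩ := exists_list_length_eq_wordNorm hS g
  obtain ⟨l', hl'_length, hl', hl'_prod⟩ := exists_list_length_eq_wordNorm hS h
  rw [← hl_length, ← hl'_length, ← List.length_append, ← hl_prod, ← hl'_prod, ← List.prod_append]
  exact wordNorm_prod_le fun x hx ↦ (List.mem_append.mp hx).elim (hl x) (hl' x)

lemma wordNorm_pow_le (hS : Subgroup.closure (S : Set G) = ⊤) (g : G) (n : ℕ) :
    wordNorm S (g ^ n) ≤ n * wordNorm S g := by
  induction n with
  | zero => simp [wordNorm_one]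
  | succ n ih =>
    rw [pow_succ, add_mul, one_mul]
    exact (wordNorm_mul_le hS _ _).trans (by gcongr)

lemma finite_wordNorm_le (hS : Subgroup.closure (S : Set G) = ⊤) (n : ℕ) :
    {g : G | wordNorm S g ≤ n}.Finite := by
  have := (finite_generators_or_inv S).to_subtype
  refine ((List.finite_length_le {x : G | x ∈ S ∨ x⁻¹ ∈ S} n).image
    fun l ↦ (l.map Subtype.val).prod).subset fun g hg ↦ ?_
  obtain ⟨l, h_length, hl, h_prod⟩ := exists_list_length_eq_wordNorm hS g
  lift l to List {x : G | x ∈ S ∨ x⁻¹ ∈ S} using hl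
  rw [List.length_map] at h_length
  exact ⟨l, h_length.trans_le hg, h_prod⟩

lemma wordNorm_induction (hS : Subgroup.closure (S : Set G) = ⊤) {P : G → ℕ → Prop} (one : P 1 0)
    (gen_mul : ∀ x g n, (x ∈ S ∨ x⁻¹ ∈ S) → wordNorm S g ≤ n → P g n → P (x * g) (n + 1))
    (g : G) : P g (wordNorm S g) := by
  obtain ⟨l, h_length, hl, h_prod⟩ := exists_list_length_eq_wordNorm hS g
  rw [← h_length, ← h_prod]
  clear h_length h_prod
  induction l with
  | nil => exact one
  | cons x l ih =>
    rw [List.forall_mem_cons] at hl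
    exact gen_mul x l.prod l.length hl.1 (wordNorm_prod_le hl.2) (ih hl.2)

lemma abs_le_mul_wordNorm_of_map_mul (hS : Subgroup.closure (S : Set G) = ⊤) {f : G → ℤ}
    (hf : ∀ g h, f (g * h) = f g + f h) {K : ℤ}
    (hK : ∀ x, (x ∈ S ∨ x⁻¹ ∈ S) → |f x| ≤ K) (g : G) : |f g| ≤ K * wordNorm S g := by
  have hf_one : f 1 = 0 := by simpa using hf 1 1
  refine wordNorm_induction hS (P := fun g n ↦ |f g| ≤ K * n) (by simp [hf_one])
    (fun x g n hx _ ih ↦ ?_) g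
  calc |f (x * g)| ≤ |f x| + |f g| := by
        rw [hf]
        exact abs_add_le _ _
    _ ≤ K + K * n := add_le_add (hK x hx) ih
    _ = K * (n + 1 : ℕ) := by push_cast; ring

variable {M : Type*} [AddCommGroup M] {π : G → M}

lemma exists_abs_linear_le_mul_wordNorm (hS : Subgroup.closure (S : Set G) = ⊤)
    (hπ : ∀ g h, π (g * h) = π g + π h) (f : M →ₗ[ℤ] ℤ) :
    ∃ K : ℕ, ∀ g, |f (π g)| ≤ K * wordNorm S g := by
  obtain ⟨K, hK⟩ := exists_abs_le_on_generators S fun g ↦ f (π g)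
  exact ⟨K, abs_le_mul_wordNorm_of_map_mul hS (fun g h ↦ by rw [hπ, map_add]) hK⟩

lemma exists_abs_bilinear_le_mul_wordNorm (hS : Subgroup.closure (S : Set G) = ⊤)
    (hπ : ∀ g h, π (g * h) = π g + π h) (β : M →ₗ[ℤ] M →ₗ[ℤ] ℤ) :
    ∃ K : ℕ, ∀ g h, |β (π g) (π h)| ≤ K * wordNorm S g * wordNorm S h := by
  choose K hK using fun g ↦ exists_abs_linear_le_mul_wordNorm hS hπ (β (π g))
  obtain ⟨L, hL⟩ := exists_abs_le_on_generators S fun g ↦ (K g : ℤ)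
  refine ⟨L, fun g h ↦ ?_⟩
  rw [mul_right_comm]
  refine abs_le_mul_wordNorm_of_map_mul hS (f := fun g ↦ β (π g) (π h))
    (fun g g' ↦ by rw [hπ, map_add, LinearMap.add_apply]) (fun x hx ↦ (hK x h).trans ?_) g
  gcongr
  exact Int.ofNat_le.mp ((le_abs_self _).trans (hL x hx))

lemma exists_abs_le_mul_wordNorm_sq (hS : Subgroup.closure (S : Set G) = ⊤)
    (hπ : ∀ g h, π (g * h) = π g + π h) (β : M →ₗ[ℤ] M →ₗ[ℤ] ℤ) {z : G → ℤ}
    (hz : ∀ g h, z (g * h) = z g + z h + β (π g) (π h)) :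
    ∃ K : ℕ, ∀ g, |z g| ≤ K * wordNorm S g ^ 2 := by
  obtain ⟨A, hA⟩ := exists_abs_le_on_generators S z
  obtain ⟨B, hB⟩ := exists_abs_bilinear_le_mul_wordNorm hS hπ β
  have hπ_one : π 1 = 0 := by simpa using hπ 1 1
  have hz_one : z 1 = 0 := by simpa [hπ_one] using hz 1 1
  refine ⟨A + B, wordNorm_induction hS (P := fun g n ↦ |z g| ≤ (A + B : ℕ) * (n : ℤ) ^ 2)
    (by simp [hz_one]) fun x g n hx hg ih ↦ ?_⟩
  have h_cross : |β (π x) (π g)| ≤ B * n :=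
    (hB x g).trans <| by
      calc (B : ℤ) * wordNorm S x * wordNorm S g ≤ B * (1 : ℕ) * n := by
            gcongr
            exact wordNorm_le_one hx
        _ = B * n := by ring
  calc |z (x * g)| ≤ |z x| + |z g| + |β (π x) (π g)| := by
        rw [hz]
        exact abs_add_three _ _ _
    _ ≤ A + (A + B : ℕ) * (n : ℤ) ^ 2 + B * n := by
        gcongr
        exact hA x hx
    _ ≤ (A + B : ℕ) * ((n + 1 : ℕ) : ℤ) ^ 2 := by
        push_cast
        nlinarith [mul_nonneg (Int.natCast_nonneg A) (Int.natCast_nonneg n),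
          mul_nonneg (Int.natCast_nonneg B) (Int.natCast_nonneg n)]

end WordNorm

section TwistedConj

variable {G : Type*} [Group G] {ψ : G ≃* G}

lemma TwistedConj.symm {x y : G} (h : TwistedConj ψ x y) : TwistedConj ψ y x := by
  obtain ⟨g, rfl⟩ := h
  exact ⟨g⁻¹, by simp [mul_assoc]⟩

lemma TwistedConj.trans {x y z : G} (hxy : TwistedConj ψ x y) (hyz : TwistedConj ψ y z) :
    TwistedConj ψ x z := by
  obtain ⟨g, rfl⟩ := hxy
  obtain ⟨h, rfl⟩ := hyz
  exact ⟨h * g, by simp [mul_assoc]⟩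

lemma setOf_twistedConj_eq_iff {x y : G} :
    {z | TwistedConj ψ x z} = {z | TwistedConj ψ y z} ↔ TwistedConj ψ x y := by
  refine ⟨fun h ↦ ?_, fun h ↦ Set.ext fun z ↦ ⟨h.symm.trans, h.trans⟩⟩
  have hy : y ∈ {z | TwistedConj ψ y z} := ⟨1, by simp⟩
  rwa [← h] at hy

variable {S : Finset G} {ι : Type*} {n : ℕ}

lemma twistedGrowth_le_card (I : G → ι) (hI : ∀ x y, I x = I y → TwistedConj ψ x y)
    (U : Finset ι) (hU : ∀ g, wordNorm S g ≤ n → I g ∈ U) : twistedGrowth ψ S n ≤ U.card := by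
  let fiberClass : ι → Set G := fun i ↦ {z | ∃ x, I x = i ∧ TwistedConj ψ x z}
  have h_subset : (fun x ↦ {z | TwistedConj ψ x z}) '' {g : G | wordNorm S g ≤ n} ⊆
      fiberClass '' U := by
    rintro _ ⟨x, hx, rfl⟩
    refine ⟨I x, hU x hx, Set.ext fun z ↦ ⟨?_, fun hz ↦ ⟨x, rfl, hz⟩⟩⟩
    rintro ⟨y, hy, hyz⟩
    exact (hI x y hy.symm).trans hyz
  refine (Set.ncard_le_ncard h_subset (U.finite_toSet.image _)).trans ?_
  exact (Set.ncard_image_le U.finite_toSet).trans_eq (Set.ncard_coe_finset U)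

lemma card_le_twistedGrowth (hS : Subgroup.closure (S : Set G) = ⊤) (U : Finset ι) (X : ι → G)
    (h_norm : ∀ i ∈ U, wordNorm S (X i) ≤ n)
    (h_inj : ∀ i ∈ U, ∀ j ∈ U, TwistedConj ψ (X i) (X j) → i = j) :
    U.card ≤ twistedGrowth ψ S n := by
  rw [← Set.ncard_coe_finset U]
  exact Set.ncard_le_ncard_of_injOn (fun i ↦ {z | TwistedConj ψ (X i) z})
    (fun i hi ↦ ⟨X i, h_norm i hi, rfl⟩)
    (fun i hi j hj hij ↦ h_inj i hi j hj (setOf_twistedConj_eq_iff.mp hij))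
    ((finite_wordNorm_le hS n).image _)

lemma monotone_twistedGrowth (hS : Subgroup.closure (S : Set G) = ⊤) :
    Monotone (twistedGrowth ψ S) := fun _ n hmn ↦
  Set.ncard_le_ncard (Set.image_mono fun _ hg ↦ le_trans hg hmn) ((finite_wordNorm_le hS n).image _)

end TwistedConj

section Transport

variable {G H : Type*} [Group G] [Group H] (e : G ≃* H)

lemma wordNorm_map (S : Finset G) (g : G) :
    wordNorm (S.map e.toEquiv.toEmbedding) (e g) = wordNorm S g := by
  unfold wordNorm
  congr 1 with n
  rw [Set.mem_ofPred_eq, e.toEquiv.listEquivOfEquiv.surjective.exists]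
  refine exists_congr fun l ↦ ?_
  simp [Equiv.listEquivOfEquiv, ← map_list_prod, ← map_inv]

lemma twistedConj_map_iff {ψ : H ≃* H} {x y : G} :
    TwistedConj ψ (e x) (e y) ↔ TwistedConj ((e.trans ψ).trans e.symm) x y := by
  refine e.surjective.exists.trans (exists_congr fun g ↦ ?_)
  simp [← e.symm_apply_eq]

lemma twistedGrowth_map (ψ : H ≃* H) (S : Finset G) (n : ℕ) :
    twistedGrowth ψ (S.map e.toEquiv.toEmbedding) n =
      twistedGrowth ((e.trans ψ).trans e.symm) S n := by
  have h_ball : {h | wordNorm (S.map e.toEquiv.toEmbedding) h ≤ n} =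
      e '' {g | wordNorm S g ≤ n} := by
    ext h
    obtain ⟨g, rfl⟩ := e.surjective h
    rw [e.injective.mem_set_image, Set.mem_ofPred_eq, wordNorm_map, Set.mem_ofPred_eq]
  have h_class : ∀ x, {h | TwistedConj ψ (e x) h} =
      e '' {g | TwistedConj ((e.trans ψ).trans e.symm) x g} := fun x ↦ by
    ext h
    obtain ⟨g, rfl⟩ := e.surjective h
    simp [twistedConj_map_iff]
  simp only [twistedGrowth, h_ball, Set.image_image, h_class]
  rw [← Set.image_image (e '' ·), Set.ncard_image_of_injective _ e.injective.image_injective]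

lemma closure_map_eq_top {S : Finset G} (hS : Subgroup.closure (S : Set G) = ⊤) :
    Subgroup.closure (S.map e.toEquiv.toEmbedding : Set H) = ⊤ := by
  rw [Finset.coe_map]
  change Subgroup.closure (e.toMonoidHom '' S) = ⊤
  rw [← MonoidHom.map_closure, hS, Subgroup.map_top_of_surjective _ e.surjective]

end Transport

section BilinearForms

section Free

variable {R M : Type*} [CommRing R] [AddCommGroup M] [Module R M]

lemma exists_sub_flip_eq [Module.Free R M] {ω : M →ₗ[R] M →ₗ[R] R} (hω : ω.IsAlt) :
    ∃ β : M →ₗ[R] M →ₗ[R] R, β - β.flip = ω := by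
  classical
  let e := Module.Free.chooseBasis R M
  let : LinearOrder (Module.Free.ChooseBasisIndex R M) := linearOrderOfSTO WellOrderingRel
  let β : M →ₗ[R] M →ₗ[R] R :=
    e.constr R fun i ↦ e.constr R fun j ↦ if i < j then ω (e i) (e j) else 0
  have hβ : ∀ i j, β (e i) (e j) = if i < j then ω (e i) (e j) else 0 := fun i j ↦ by
    simp only [β, Module.Basis.constr_basis]
  refine ⟨β, LinearMap.ext_basis e e fun i j ↦ ?_⟩
  rw [LinearMap.sub_apply, LinearMap.sub_apply, LinearMap.flip_apply, hβ, hβ]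
  rcases lt_trichotomy i j with h | rfl | h
  · rw [if_pos h, if_neg h.not_gt, sub_zero]
  · rw [sub_self, hω]
  · rw [if_neg h.not_gt, if_pos h, zero_sub, hω.neg]

end Free

variable {M : Type*} [AddCommGroup M]

lemma exists_natAbs_min_of_ne_zero {ω : M →ₗ[ℤ] M →ₗ[ℤ] ℤ} (h_ne : ω ≠ 0) :
    ∃ u v, ω u v ≠ 0 ∧ ∀ x y, ω x y ≠ 0 → (ω u v).natAbs ≤ (ω x y).natAbs := by
  have h_nonempty : {q : M × M | ω q.1 q.2 ≠ 0}.Nonempty := by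
    contrapose! h_ne
    exact LinearMap.ext₂ fun x y ↦ not_not.mp (Set.eq_empty_iff_forall_notMem.mp h_ne (x, y))
  obtain ⟨⟨u, v⟩, h_uv, h_min⟩ :=
    (measure fun q : M × M ↦ (ω q.1 q.2).natAbs).wf.has_min _ h_nonempty
  exact ⟨u, v, h_uv, fun x y hxy ↦ not_lt.mp (h_min (x, y) hxy)⟩

lemma dvd_apply_of_natAbs_min {ω : M →ₗ[ℤ] M →ₗ[ℤ] ℤ} {u v : M} (h_ne : ω u v ≠ 0)
    (h_min : ∀ x y, ω x y ≠ 0 → (ω u v).natAbs ≤ (ω x y).natAbs) (x : M) : ω u v ∣ ω u x := by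
  by_contra h_dvd
  have h_rem : ω u (x - (ω u x / ω u v) • v) = ω u x % ω u v := by
    rw [map_sub, map_smul, smul_eq_mul, Int.emod_def, mul_comm]
  have h_le := h_min u (x - (ω u x / ω u v) • v)
    (by rwa [h_rem, ne_eq, ← Int.dvd_iff_emod_eq_zero])
  have h_lt := Int.emod_lt_abs (ω u x) h_ne
  have h_nonneg := Int.emod_nonneg (ω u x) h_ne
  rw [h_rem] at h_le
  rw [Int.abs_eq_natAbs] at h_lt
  omega

lemma exists_linear_eq_mul {f : M →ₗ[ℤ] ℤ} {d : ℤ} (hd : d ≠ 0) (hf : ∀ x, d ∣ f x) :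
    ∃ a : M →ₗ[ℤ] ℤ, ∀ x, f x = d * a x := by
  choose a ha using hf
  refine ⟨(AddMonoidHom.mk' a fun x y ↦ mul_left_cancel₀ hd ?_).toIntLinearMap, ha⟩
  rw [mul_add, ← ha, ← ha, ← ha, map_add]

variable (M) in
/-- A rank two direct summand of `M` with a chosen complement: `u, v` is a basis of the summand,
`a, b` are the coordinates along it, and the complement is the common kernel of `a` and `b`. -/
structure PlaneSplitting where
  u : M
  v : M
  a : M →ₗ[ℤ] ℤ
  b : M →ₗ[ℤ] ℤ
  a_u : a u = 1
  a_v : a v = 0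
  b_u : b u = 0
  b_v : b v = 1

namespace PlaneSplitting

attribute [simp] a_u a_v b_u b_v

variable (P : PlaneSplitting M)

/-- The projection of `M` onto the complement of the plane. -/
def complProj : M →ₗ[ℤ] M := LinearMap.id - P.a.smulRight P.u - P.b.smulRight P.v

lemma complProj_apply (x : M) : P.complProj x = x - P.a x • P.u - P.b x • P.v := rfl

@[simp]
lemma a_complProj (x : M) : P.a (P.complProj x) = 0 := by simp [complProj_apply]

@[simp]
lemma b_complProj (x : M) : P.b (P.complProj x) = 0 := by simp [complProj_apply]

@[simp]
lemma complProj_u : P.complProj P.u = 0 := by simp [complProj_apply]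

@[simp]
lemma complProj_v : P.complProj P.v = 0 := by simp [complProj_apply]

@[simp]
lemma complProj_complProj (x : M) : P.complProj (P.complProj x) = P.complProj x := by
  simp [complProj_apply P (P.complProj x)]

lemma eq_smul_u_add_smul_v_add_complProj (x : M) :
    x = P.a x • P.u + P.b x • P.v + P.complProj x := by
  rw [complProj_apply]
  abel

/-- The involution of `M` that is the identity on the plane and `-1` on its complement. -/
def involution : M ≃ₗ[ℤ] M :=
  .ofInvolutive (LinearMap.id - (2 : ℤ) • P.complProj) fun x ↦ by
    simp only [LinearMap.sub_apply, LinearMap.id_apply, LinearMap.smul_apply, map_sub, map_smul,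
      complProj_complProj]
    module

lemma involution_apply (x : M) : P.involution x = x - (2 : ℤ) • P.complProj x := rfl

@[simp]
lemma a_involution (x : M) : P.a (P.involution x) = P.a x := by simp [involution_apply]

@[simp]
lemma b_involution (x : M) : P.b (P.involution x) = P.b x := by simp [involution_apply]

@[simp]
lemma complProj_involution (x : M) : P.complProj (P.involution x) = -P.complProj x := by
  rw [involution_apply, map_sub, map_smul, complProj_complProj]
  module

/-- The bilinear form equal to `d * (a x * b y)` on the plane and to `γ` on its complement, the two
summands being orthogonal. -/
def orthogonalForm (d : ℤ) (γ : M →ₗ[ℤ] M →ₗ[ℤ] ℤ) : M →ₗ[ℤ] M →ₗ[ℤ] ℤ :=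
  d • (LinearMap.mul ℤ ℤ).compl₁₂ P.a P.b + γ.compl₁₂ P.complProj P.complProj

lemma orthogonalForm_apply (d : ℤ) (γ : M →ₗ[ℤ] M →ₗ[ℤ] ℤ) (x y : M) :
    P.orthogonalForm d γ x y = d * (P.a x * P.b y) + γ (P.complProj x) (P.complProj y) := rfl

lemma orthogonalForm_involution (d : ℤ) (γ : M →ₗ[ℤ] M →ₗ[ℤ] ℤ) (x y : M) :
    P.orthogonalForm d γ (P.involution x) (P.involution y) = P.orthogonalForm d γ x y := by
  simp [orthogonalForm_apply]

lemma apply_eq_of_isAlt {ω : M →ₗ[ℤ] M →ₗ[ℤ] ℤ} (hω : ω.IsAlt) {d : ℤ}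
    (ha : ∀ x, ω x P.v = d * P.a x) (hb : ∀ x, ω P.u x = d * P.b x) (x y : M) :
    ω x y = d * (P.a x * P.b y - P.b x * P.a y) + ω (P.complProj x) (P.complProj y) := by
  have h_u : ∀ z, ω (P.complProj z) P.u = 0 := fun z ↦ by simp [← hω.neg P.u, hb]
  have h_v : ∀ z, ω P.v (P.complProj z) = 0 := fun z ↦ by simp [← hω.neg _ P.v, ha]
  have h_vu : ω P.v P.u = -d := by simp [← hω.neg P.u, hb]
  conv_lhs =>
    rw [P.eq_smul_u_add_smul_v_add_complProj x, P.eq_smul_u_add_smul_v_add_complProj y]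
  simp only [map_add, map_smul, LinearMap.add_apply, LinearMap.smul_apply, smul_eq_mul, h_u, h_v,
    h_vu, ha, hb, a_complProj, b_complProj, a_u, a_v, b_u]
  ring

end PlaneSplitting

/- A value `ω u v` of minimal nonzero size divides all values `ω u x` and `ω x v`. Hence `u, v` span
a direct summand whose `ω`-orthogonal complement is a complement of it in `M`. -/
lemma exists_planeSplitting {ω : M →ₗ[ℤ] M →ₗ[ℤ] ℤ} (hω : ω.IsAlt) (h_ne : ω ≠ 0) :
    ∃ (P : PlaneSplitting M) (d : ℤ), d ≠ 0 ∧ (∀ x, ω x P.v = d * P.a x) ∧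
      ∀ x, ω P.u x = d * P.b x := by
  obtain ⟨u, v, hd, h_min⟩ := exists_natAbs_min_of_ne_zero h_ne
  obtain ⟨a, ha⟩ := exists_linear_eq_mul (f := ω.flip v) hd
    (dvd_apply_of_natAbs_min (ω := ω.flip) hd fun x y ↦ h_min y x)
  obtain ⟨b, hb⟩ := exists_linear_eq_mul hd (dvd_apply_of_natAbs_min hd h_min)
  simp only [LinearMap.flip_apply] at ha
  refine ⟨⟨u, v, a, b, ?_, ?_, ?_, ?_⟩, ω u v, hd, ha, hb⟩ <;> apply mul_left_cancel₀ hd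
  · rw [← ha, mul_one]
  · rw [← ha, mul_zero, hω]
  · rw [← hb, mul_zero, hω]
  · rw [← hb, mul_one]

lemma exists_orthogonalForm_sub_flip_eq [Module.Free ℤ M] {ω : M →ₗ[ℤ] M →ₗ[ℤ] ℤ} (hω : ω.IsAlt)
    (h_ne : ω ≠ 0) : ∃ (P : PlaneSplitting M) (d : ℤ) (γ : M →ₗ[ℤ] M →ₗ[ℤ] ℤ), d ≠ 0 ∧
      P.orthogonalForm d γ - (P.orthogonalForm d γ).flip = ω := by
  obtain ⟨P, d, hd, ha, hb⟩ := exists_planeSplitting hω h_ne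
  obtain ⟨γ, hγ⟩ := exists_sub_flip_eq hω
  refine ⟨P, d, γ, hd, LinearMap.ext₂ fun x y ↦ ?_⟩
  rw [P.apply_eq_of_isAlt hω ha hb, ← hγ]
  simp only [LinearMap.sub_apply, LinearMap.flip_apply, PlaneSplitting.orthogonalForm_apply]
  ring

end BilinearForms

section HeisenbergGroup

variable {M : Type*} [AddCommGroup M]

lemma quotSMulTop_mk_eq_mk_iff {R : Type*} [CommRing R] [Module R M] {r : R} {x y : M} :
    (Submodule.Quotient.mk x : QuotSMulTop r M) = Submodule.Quotient.mk y ↔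
      ∃ z, x = y + r • z := by
  rw [Submodule.Quotient.eq, Submodule.mem_smul_pointwise_iff_exists]
  simp only [Submodule.mem_top, true_and, eq_comm (b := x - y), sub_eq_iff_eq_add']

lemma exists_mul_sub_mul_eq {a b k : ℤ} (h : (Int.gcd a b : ℤ) ∣ k) :
    ∃ s t : ℤ, s * b - a * t = k := by
  obtain ⟨m, rfl⟩ := h
  exact ⟨Int.gcdB a b * m, -(Int.gcdA a b * m), by rw [Int.gcd_eq_gcd_ab]; ring⟩

lemma finite_quotSMulTop [Module.Finite ℤ M] {r : ℤ} (hr : r ≠ 0) : Finite (QuotSMulTop r M) := by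
  refine Module.finite_of_fg_torsion _ fun x ↦ ⟨⟨r, mem_nonZeroDivisors_of_ne_zero hr⟩, ?_⟩
  obtain ⟨z, rfl⟩ := Submodule.Quotient.mk_surjective _ x
  exact quotSMulTop_mk_eq_mk_iff.mpr ⟨z, (zero_add _).symm⟩

/- Since `z % 0 = z`, the residues modulo `0` are limited only by the bound on `z`. -/
lemma exists_finset_emod_mem (B : ℕ) (m : ℤ) :
    ∃ V : Finset ℤ, (∀ z : ℤ, |z| ≤ B → z % m ∈ V) ∧
      V.card ≤ (if m = 0 then 2 * B + 1 else 0) + m.natAbs := by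
  split_ifs with hm
  · refine ⟨Finset.Icc (-B) B, fun z hz ↦ ?_, ?_⟩
    · rw [hm, Int.emod_zero]
      exact Finset.mem_Icc.mpr (abs_le.mp hz)
    · rw [Int.card_Icc]
      omega
  · refine ⟨Finset.Ico 0 |m|, fun z _ ↦ Finset.mem_Ico.mpr
      ⟨Int.emod_nonneg z hm, Int.emod_lt_abs z hm⟩, ?_⟩
    rw [Int.card_Ico, Int.abs_eq_natAbs]
    omega

/-- The Heisenberg group of an integral bilinear form `β` on `M`: the central extension of `M` by
`ℤ` with underlying set `M × ℤ` and cocycle `β`. -/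
@[ext]
structure HeisenbergGroup (β : M →ₗ[ℤ] M →ₗ[ℤ] ℤ) where
  base : M
  height : ℤ

namespace HeisenbergGroup

variable {β : M →ₗ[ℤ] M →ₗ[ℤ] ℤ}

instance : Mul (HeisenbergGroup β) :=
  ⟨fun g h ↦ ⟨g.base + h.base, g.height + h.height + β g.base h.base⟩⟩

instance : One (HeisenbergGroup β) := ⟨⟨0, 0⟩⟩

instance : Inv (HeisenbergGroup β) := ⟨fun g ↦ ⟨-g.base, β g.base g.base - g.height⟩⟩

@[simp]
lemma base_mul (g h : HeisenbergGroup β) : (g * h).base = g.base + h.base := rfl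

@[simp]
lemma height_mul (g h : HeisenbergGroup β) :
    (g * h).height = g.height + h.height + β g.base h.base := rfl

@[simp]
lemma base_one : (1 : HeisenbergGroup β).base = 0 := rfl

@[simp]
lemma height_one : (1 : HeisenbergGroup β).height = 0 := rfl

@[simp]
lemma base_inv (g : HeisenbergGroup β) : g⁻¹.base = -g.base := rfl

@[simp]
lemma height_inv (g : HeisenbergGroup β) : g⁻¹.height = β g.base g.base - g.height := rfl

instance : Group (HeisenbergGroup β) :=
  .ofLeftAxioms
    (fun g h k ↦ HeisenbergGroup.ext (add_assoc _ _ _) <| by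
      simp only [height_mul, base_mul, map_add, LinearMap.add_apply]
      ring)
    (fun g ↦ by ext <;> simp)
    (fun g ↦ by ext <;> simp)

lemma mk_pow_of_self_eq_zero {x : M} (hx : β x x = 0) (t : ℤ) (n : ℕ) :
    (⟨x, t⟩ : HeisenbergGroup β) ^ n = ⟨n • x, n * t⟩ := by
  induction n with
  | zero => ext <;> simp
  | succ n ih =>
    rw [pow_succ, ih]
    ext
    · simp [add_smul]
    · simp [hx, add_mul]

/-- The automorphism of the Heisenberg group of `β` induced by an isometry of `β`. -/
def ofIsometry (A : M ≃ₗ[ℤ] M) (hA : ∀ x y, β (A x) (A y) = β x y) :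
    HeisenbergGroup β ≃* HeisenbergGroup β where
  toFun g := ⟨A g.base, g.height⟩
  invFun g := ⟨A.symm g.base, g.height⟩
  left_inv g := by simp
  right_inv g := by simp
  map_mul' g h := by ext <;> simp [hA]

@[simp]
lemma base_ofIsometry {A : M ≃ₗ[ℤ] M} {hA : ∀ x y, β (A x) (A y) = β x y}
    (g : HeisenbergGroup β) : (ofIsometry A hA g).base = A g.base := rfl

@[simp]
lemma height_ofIsometry {A : M ≃ₗ[ℤ] M} {hA : ∀ x y, β (A x) (A y) = β x y}
    (g : HeisenbergGroup β) : (ofIsometry A hA g).height = g.height := rfl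

lemma twistedConj_ofIsometry_iff {A : M ≃ₗ[ℤ] M} {hA : ∀ x y, β (A x) (A y) = β x y}
    {x y : HeisenbergGroup β} :
    TwistedConj (ofIsometry A hA) x y ↔ ∃ w, y.base + A w = w + x.base ∧
      y.height + β y.base (A w) = x.height + β w x.base := by
  simp only [TwistedConj, mul_inv_eq_iff_eq_mul, HeisenbergGroup.ext_iff, base_mul, height_mul,
    base_ofIsometry, height_ofIsometry]
  constructor
  · rintro ⟨g, h_base, h_height⟩
    exact ⟨g.base, h_base.symm, by linarith⟩
  · rintro ⟨w, h_base, h_height⟩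
    exact ⟨⟨w, 0⟩, h_base.symm, by linarith⟩

variable {P : PlaneSplitting M} {d : ℤ} {γ : M →ₗ[ℤ] M →ₗ[ℤ] ℤ}

variable (P d γ) in
/-- The automorphism of the Heisenberg group that is the identity on the plane of `P`, negation on
its complement, and the identity on heights. -/
def planeAutomorphism :
    HeisenbergGroup (P.orthogonalForm d γ) ≃* HeisenbergGroup (P.orthogonalForm d γ) :=
  ofIsometry P.involution (P.orthogonalForm_involution d γ)

/-- The height coordinate, corrected so that twisted conjugation shifts it by a quantity depending
only on the plane coordinates. It is doubled to stay integral. -/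
def correctedHeight (x : HeisenbergGroup (P.orthogonalForm d γ)) : ℤ :=
  2 * x.height - γ (P.complProj x.base) (P.complProj x.base)

lemma twistedConj_planeAutomorphism_iff {x y : HeisenbergGroup (P.orthogonalForm d γ)} :
    TwistedConj (planeAutomorphism P d γ) x y ↔ ∃ w,
      y.base = x.base + (2 : ℤ) • P.complProj w ∧ y.correctedHeight =
        x.correctedHeight + 2 * d * (P.a w * P.b x.base - P.a x.base * P.b w) := by
  rw [planeAutomorphism, twistedConj_ofIsometry_iff]
  refine exists_congr fun w ↦ ?_
  have h_base : y.base + P.involution w = w + x.base ↔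
      y.base = x.base + (2 : ℤ) • P.complProj w := by
    rw [P.involution_apply, ← add_sub_assoc, sub_eq_iff_eq_add, add_comm w, add_right_comm,
      add_left_inj]
  rw [h_base]
  refine and_congr_right fun h ↦ ?_
  simp only [correctedHeight, h, PlaneSplitting.orthogonalForm_apply, P.b_involution,
    P.complProj_involution, P.a_complProj, P.complProj_complProj, map_neg, map_add, map_smul,
    LinearMap.add_apply, LinearMap.smul_apply, smul_eq_mul]
  constructor <;> intro h_height <;> linarith

/-- A complete invariant of twisted conjugacy for `planeAutomorphism`: the plane coordinates, the
complementary coordinates modulo `2`, and the corrected height modulo its possible shifts. The plane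
coordinates come first in a sigma type because they determine the modulus of the last component. -/
def twistedInvariant (x : HeisenbergGroup (P.orthogonalForm d γ)) :
    Σ _ : ℤ × ℤ, QuotSMulTop (2 : ℤ) M × ℤ :=
  ⟨(P.a x.base, P.b x.base), Submodule.Quotient.mk (P.complProj x.base),
    x.correctedHeight % (2 * d * Int.gcd (P.a x.base) (P.b x.base))⟩

lemma twistedInvariant_eq_iff {x y : HeisenbergGroup (P.orthogonalForm d γ)} :
    twistedInvariant x = twistedInvariant y ↔ P.a y.base = P.a x.base ∧ P.b y.base = P.b x.base ∧
      (∃ z, P.complProj y.base = P.complProj x.base + (2 : ℤ) • z) ∧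
      2 * d * Int.gcd (P.a x.base) (P.b x.base) ∣ y.correctedHeight - x.correctedHeight := by
  simp only [twistedInvariant, Sigma.mk.injEq, heq_eq_eq, Prod.mk.injEq, and_assoc]
  rw [eq_comm (a := P.a x.base), eq_comm (a := P.b x.base)]
  refine and_congr_right fun ha ↦ and_congr_right fun hb ↦ and_congr ?_ ?_
  · rw [eq_comm, quotSMulTop_mk_eq_mk_iff]
  · rw [ha, hb]
    exact Int.modEq_iff_dvd

lemma twistedConj_iff_twistedInvariant_eq {x y : HeisenbergGroup (P.orthogonalForm d γ)} :
    TwistedConj (planeAutomorphism P d γ) x y ↔ twistedInvariant x = twistedInvariant y := by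
  rw [twistedConj_planeAutomorphism_iff, twistedInvariant_eq_iff]
  constructor
  · rintro ⟨w, h_base, h_height⟩
    refine ⟨by simp [h_base], by simp [h_base], ⟨P.complProj w, by simp [h_base]⟩, ?_⟩
    rw [h_height, add_sub_cancel_left]
    exact mul_dvd_mul_left _
      (((Int.gcd_dvd_right ..).mul_left _).sub ((Int.gcd_dvd_left ..).mul_right _))
  · rintro ⟨ha, hb, ⟨z, hz⟩, k, hk⟩
    obtain ⟨s, t, hst⟩ := exists_mul_sub_mul_eq (dvd_mul_right
      (Int.gcd (P.a x.base) (P.b x.base) : ℤ) k)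
    have h_compl : P.complProj y.base = P.complProj x.base + (2 : ℤ) • P.complProj z := by
      rw [← P.complProj_complProj y.base, hz, map_add, map_smul, P.complProj_complProj]
    refine ⟨s • P.u + t • P.v + P.complProj z, ?_, ?_⟩
    · rw [P.eq_smul_u_add_smul_v_add_complProj y.base, ha, hb, h_compl, ← add_assoc,
        ← P.eq_smul_u_add_smul_v_add_complProj x.base]
      simp
    · rw [← sub_eq_iff_eq_add', hk, mul_assoc, ← hst]
      simp

lemma correctedHeight_mul (x y : HeisenbergGroup (P.orthogonalForm d γ)) :
    (x * y).correctedHeight = x.correctedHeight + y.correctedHeight +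
      P.orthogonalForm (2 * d) (γ - γ.flip) x.base y.base := by
  simp only [correctedHeight, base_mul, height_mul, PlaneSplitting.orthogonalForm_apply, map_add,
    LinearMap.add_apply, LinearMap.sub_apply, LinearMap.flip_apply]
  ring

section Growth

variable {S : Finset (HeisenbergGroup (P.orthogonalForm d γ))}

lemma exists_abs_coordinates_le
    (hS : Subgroup.closure (S : Set (HeisenbergGroup (P.orthogonalForm d γ))) = ⊤) :
    ∃ K : ℕ, ∀ n x, wordNorm S x ≤ n → |P.a x.base| ≤ (K * n : ℕ) ∧ |P.b x.base| ≤ (K * n : ℕ) ∧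
      |x.correctedHeight| ≤ ((K * n) ^ 2 : ℕ) := by
  obtain ⟨A, hA⟩ := exists_abs_linear_le_mul_wordNorm hS base_mul P.a
  obtain ⟨B, hB⟩ := exists_abs_linear_le_mul_wordNorm hS base_mul P.b
  obtain ⟨C, hC⟩ := exists_abs_le_mul_wordNorm_sq hS base_mul _ correctedHeight_mul
  refine ⟨A + B + C, fun n x hx ↦ ⟨(hA x).trans ?_, (hB x).trans ?_, (hC x).trans ?_⟩⟩
  · exact mod_cast Nat.mul_le_mul (by omega) hx
  · exact mod_cast Nat.mul_le_mul (by omega) hx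
  · rw [mul_pow]
    have hC_le : C ≤ (A + B + C) ^ 2 := (Nat.le_self_pow two_ne_zero C).trans (by gcongr; omega)
    exact mod_cast Nat.mul_le_mul hC_le (Nat.pow_le_pow_left hx 2)

lemma twistedGrowth_le_mul_sum_gcd [Module.Finite ℤ M] (hd : d ≠ 0) {n N B : ℕ}
    (h_bound : ∀ x, wordNorm S x ≤ n → |P.a x.base| ≤ N ∧ |P.b x.base| ≤ N ∧
      |x.correctedHeight| ≤ B) :
    twistedGrowth (planeAutomorphism P d γ) S n ≤ Nat.card (QuotSMulTop (2 : ℤ) M) *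
      (2 * B + 1 + 2 * d.natAbs *
        ∑ q ∈ Finset.Icc (-N : ℤ) N ×ˢ Finset.Icc (-N : ℤ) N, Int.gcd q.1 q.2) := by
  have := finite_quotSMulTop (M := M) two_ne_zero
  have := Fintype.ofFinite (QuotSMulTop (2 : ℤ) M)
  choose V hV hV_card using fun q : ℤ × ℤ ↦ exists_finset_emod_mem B (2 * d * Int.gcd q.1 q.2)
  let box := Finset.Icc (-N : ℤ) N ×ˢ Finset.Icc (-N : ℤ) N
  have h_mem : ∀ x, wordNorm S x ≤ n → twistedInvariant x ∈
      box.sigma fun q ↦ (Finset.univ : Finset (QuotSMulTop (2 : ℤ) M)) ×ˢ V q := fun x hx ↦ by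
    obtain ⟨ha, hb, h_height⟩ := h_bound x hx
    simp only [twistedInvariant, box, Finset.mem_sigma, Finset.mem_product, Finset.mem_Icc,
      Finset.mem_univ, true_and]
    exact ⟨⟨abs_le.mp ha, abs_le.mp hb⟩, hV _ _ h_height⟩
  refine (twistedGrowth_le_card twistedInvariant
    (fun x y ↦ twistedConj_iff_twistedInvariant_eq.mpr) _ h_mem).trans ?_
  simp only [Finset.card_sigma, Finset.card_product, Finset.card_univ, ← Finset.mul_sum,
    Nat.card_eq_fintype_card]
  gcongr
  calc ∑ q ∈ box, (V q).card
      ≤ ∑ q ∈ box, ((if q = (0, 0) then 2 * B + 1 else 0) +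
          2 * d.natAbs * Int.gcd q.1 q.2) := by
        refine Finset.sum_le_sum fun q _ ↦ (hV_card q).trans_eq ?_
        simp [hd, Int.natAbs_mul, Prod.ext_iff, Int.gcd_eq_zero_iff]
    _ = 2 * B + 1 + 2 * d.natAbs * ∑ q ∈ box, Int.gcd q.1 q.2 := by
        rw [Finset.sum_add_distrib, Finset.sum_ite_eq', if_pos (by simp [box]), Finset.mul_sum]

lemma growthLE_twistedGrowth_planeAutomorphism [Module.Finite ℤ M] (hd : d ≠ 0)
    (hS : Subgroup.closure (S : Set (HeisenbergGroup (P.orthogonalForm d γ))) = ⊤) :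
    GrowthLE (fun n ↦ (twistedGrowth (planeAutomorphism P d γ) S n : ℝ))
      fun n ↦ (n : ℝ) ^ 2 * Real.log n := by
  obtain ⟨K, hK⟩ := exists_abs_coordinates_le hS
  let Q := Nat.card (QuotSMulTop (2 : ℤ) M)
  refine .of_le_pow_mul_one_add_log (Q * (2 + 18 * d.natAbs)) K fun n ↦ ?_
  have h_gcd := sum_int_gcd_le_sq_mul_log (K * n)
  have h_growth := twistedGrowth_le_mul_sum_gcd hd (hK n)
  generalize K * n = N at h_gcd h_growth ⊢
  set gcdSum := ∑ q ∈ Finset.Icc (-N : ℤ) N ×ˢ Finset.Icc (-N : ℤ) N, Int.gcd q.1 q.2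
  have h_sq : (N : ℝ) ^ 2 ≤ N ^ 2 * (1 + Real.log N) :=
    le_mul_of_one_le_right (by positivity) (le_add_of_nonneg_right (Real.log_natCast_nonneg N))
  set T : ℝ := N ^ 2 * (1 + Real.log N)
  calc (twistedGrowth (planeAutomorphism P d γ) S n : ℝ)
      ≤ Q * (2 * N ^ 2 + 1 + 2 * d.natAbs * gcdSum) := mod_cast h_growth
    _ ≤ Q * (2 * T + 2 + 2 * d.natAbs * (9 * (1 + T))) := by
        gcongr
        · norm_num
        · linarith
    _ = (Q * (2 + 18 * d.natAbs) : ℕ) * (1 + T) := by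
        push_cast
        ring

variable (P d γ) in
/-- The element `s • u + t • v` of the plane at height `r`. -/
def planePoint (s t r : ℕ) : HeisenbergGroup (P.orthogonalForm d γ) := ⟨s • P.u + t • P.v, r⟩

lemma planePoint_eq_pow_mul_pow_mul_pow (s t r : ℕ) :
    planePoint P d γ s t r = ⟨P.v, 0⟩ ^ t * ⟨P.u, 0⟩ ^ s * ⟨0, 1⟩ ^ r := by
  rw [mk_pow_of_self_eq_zero (by simp [P.orthogonalForm_apply]),
    mk_pow_of_self_eq_zero (by simp [P.orthogonalForm_apply]),
    mk_pow_of_self_eq_zero (by simp)]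
  ext
  · simp [planePoint, add_comm]
  · simp [planePoint, P.orthogonalForm_apply]

lemma exists_wordNorm_planePoint_le
    (hS : Subgroup.closure (S : Set (HeisenbergGroup (P.orthogonalForm d γ))) = ⊤) :
    ∃ K : ℕ, ∀ n s t r, s ≤ n → t ≤ n → r ≤ n → wordNorm S (planePoint P d γ s t r) ≤ K * n := by
  refine ⟨wordNorm S ⟨P.v, 0⟩ + wordNorm S ⟨P.u, 0⟩ + wordNorm S ⟨0, 1⟩,
    fun n s t r hs ht hr ↦ ?_⟩
  rw [planePoint_eq_pow_mul_pow_mul_pow]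
  calc wordNorm S (⟨P.v, 0⟩ ^ t * ⟨P.u, 0⟩ ^ s * ⟨0, 1⟩ ^ r)
      ≤ wordNorm S (⟨P.v, 0⟩ ^ t) + wordNorm S (⟨P.u, 0⟩ ^ s) + wordNorm S (⟨0, 1⟩ ^ r) :=
        (wordNorm_mul_le hS _ _).trans (Nat.add_le_add_right (wordNorm_mul_le hS _ _) _)
    _ ≤ t * wordNorm S ⟨P.v, 0⟩ + s * wordNorm S ⟨P.u, 0⟩ + r * wordNorm S ⟨0, 1⟩ := by
        gcongr <;> exact wordNorm_pow_le hS _ _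
    _ ≤ n * wordNorm S ⟨P.v, 0⟩ + n * wordNorm S ⟨P.u, 0⟩ + n * wordNorm S ⟨0, 1⟩ := by
        gcongr
    _ = (wordNorm S ⟨P.v, 0⟩ + wordNorm S ⟨P.u, 0⟩ + wordNorm S ⟨0, 1⟩) * n := by ring

lemma eq_of_twistedConj_planePoint {s t r s' t' r' : ℕ} (hr : r < s.gcd t) (hr' : r' < s'.gcd t')
    (h : TwistedConj (planeAutomorphism P d γ) (planePoint P d γ s t r)
      (planePoint P d γ s' t' r')) : s' = s ∧ t' = t ∧ r' = r := by
  obtain ⟨hs, ht, -, h_dvd⟩ :=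
    twistedInvariant_eq_iff.mp (twistedConj_iff_twistedInvariant_eq.mp h)
  obtain rfl : s' = s := by simpa [planePoint] using hs
  obtain rfl : t' = t := by simpa [planePoint] using ht
  have h_gcd_dvd : (s'.gcd t' : ℤ) ∣ r' - r := by
    refine Int.dvd_of_mul_dvd_mul_left two_ne_zero
      ((mul_dvd_mul_left 2 (dvd_mul_left _ d)).trans ?_)
    simpa [planePoint, correctedHeight, mul_sub, mul_assoc] using h_dvd
  exact ⟨rfl, rfl, Nat.ModEq.eq_of_lt_of_lt (Nat.modEq_iff_dvd.mpr h_gcd_dvd).symm hr' hr⟩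

lemma sum_gcd_le_twistedGrowth
    (hS : Subgroup.closure (S : Set (HeisenbergGroup (P.orthogonalForm d γ))) = ⊤) :
    ∃ K : ℕ, ∀ n, ∑ q ∈ Finset.Ioc 0 n ×ˢ Finset.Ioc 0 n, q.1.gcd q.2 ≤
      twistedGrowth (planeAutomorphism P d γ) S (K * n) := by
  obtain ⟨K, hK⟩ := exists_wordNorm_planePoint_le hS
  refine ⟨K, fun n ↦ ?_⟩
  let U := (Finset.Ioc 0 n ×ˢ Finset.Ioc 0 n).sigma fun q ↦ Finset.range (q.1.gcd q.2)
  have hU : ∑ q ∈ Finset.Ioc 0 n ×ˢ Finset.Ioc 0 n, q.1.gcd q.2 = U.card := by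
    simp only [U, Finset.card_sigma, Finset.card_range]
  rw [hU]
  refine card_le_twistedGrowth hS U (fun i ↦ planePoint P d γ i.1.1 i.1.2 i.2) ?_ ?_
  · rintro ⟨⟨s, t⟩, r⟩ hi
    simp only [U, Finset.mem_sigma, Finset.mem_product, Finset.mem_Ioc, Finset.mem_range] at hi
    obtain ⟨⟨⟨hs_pos, hs⟩, -, ht⟩, hr⟩ := hi
    exact hK n s t r hs ht (hr.le.trans ((Nat.gcd_le_left t hs_pos).trans hs))
  · rintro ⟨⟨s, t⟩, r⟩ hi ⟨⟨s', t'⟩, r'⟩ hj h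
    simp only [U, Finset.mem_sigma, Finset.mem_range] at hi hj
    obtain ⟨rfl, rfl, rfl⟩ := eq_of_twistedConj_planePoint hi.2 hj.2 h
    rfl

lemma growthEquiv_twistedGrowth_planeAutomorphism [Module.Finite ℤ M] (hd : d ≠ 0)
    (hS : Subgroup.closure (S : Set (HeisenbergGroup (P.orthogonalForm d γ))) = ⊤) :
    GrowthEquiv (fun n ↦ (twistedGrowth (planeAutomorphism P d γ) S n : ℝ))
      fun n ↦ (n : ℝ) ^ 2 * Real.log n := by
  refine ⟨growthLE_twistedGrowth_planeAutomorphism hd hS, ?_⟩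
  obtain ⟨K, hK⟩ := sum_gcd_le_twistedGrowth hS
  refine .of_le_mul (fun m n hmn ↦ mod_cast monotone_twistedGrowth hS hmn) 4 K fun n ↦ ?_
  calc (n : ℝ) ^ 2 * Real.log n
      ≤ 4 * (∑ q ∈ Finset.Ioc 0 n ×ˢ Finset.Ioc 0 n, q.1.gcd q.2 : ℕ) := sq_mul_log_le_sum_gcd n
    _ ≤ (4 : ℕ) * max 1 (twistedGrowth (planeAutomorphism P d γ) S (K * n) : ℝ) := by
        push_cast
        gcongr
        exact le_max_of_le_right (mod_cast hK n)

end Growth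

end HeisenbergGroup

end HeisenbergGroup

section IntCentralExtension

/-- A central extension of `M` by `ℤ` with total group `G`: the kernel of `proj` is the infinite
cyclic central subgroup generated by `gen`. As `G` is multiplicative and `M` additive, `proj` is a
function together with its homomorphism property. -/
structure IntCentralExtension (G M : Type*) [Group G] [AddCommGroup M] where
  proj : G → M
  proj_mul : ∀ g h, proj (g * h) = proj g + proj h
  proj_surjective : Function.Surjective proj
  gen : G
  gen_commute : ∀ g, Commute gen g
  zpow_gen_injective : Function.Injective fun n : ℤ ↦ gen ^ n
  proj_eq_zero_iff : ∀ g, proj g = 0 ↔ ∃ n : ℤ, gen ^ n = g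

namespace IntCentralExtension

variable {G M : Type*} [Group G] [AddCommGroup M] (E : IntCentralExtension G M)

lemma zpow_gen_mul_comm (n : ℤ) (g : G) : E.gen ^ n * g = g * E.gen ^ n :=
  (E.gen_commute g).zpow_left n

lemma proj_zpow_gen (n : ℤ) : E.proj (E.gen ^ n) = 0 := (E.proj_eq_zero_iff _).mpr ⟨n, rfl⟩

lemma proj_one : E.proj 1 = 0 := by simpa using E.proj_zpow_gen 0

lemma proj_inv (g : G) : E.proj g⁻¹ = -E.proj g := by
  rw [eq_neg_iff_add_eq_zero, ← E.proj_mul, inv_mul_cancel, E.proj_one]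

lemma exists_eq_zpow_gen_mul_of_proj_eq {g h : G} (hgh : E.proj g = E.proj h) :
    ∃ n : ℤ, g = E.gen ^ n * h := by
  obtain ⟨n, hn⟩ := (E.proj_eq_zero_iff (g * h⁻¹)).mp
    (by rw [E.proj_mul, E.proj_inv, hgh, add_neg_cancel])
  exact ⟨n, by rw [hn, inv_mul_cancel_right]⟩

lemma exists_mul_eq_zpow_gen_mul_mul (g h : G) : ∃ n : ℤ, g * h = E.gen ^ n * (h * g) :=
  E.exists_eq_zpow_gen_mul_of_proj_eq (by rw [E.proj_mul, E.proj_mul, add_comm])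

/-- The exponent of `gen` in the commutator of two elements. -/
noncomputable def commExp (g h : G) : ℤ := (E.exists_mul_eq_zpow_gen_mul_mul g h).choose

lemma mul_eq_zpow_commExp_mul (g h : G) : g * h = E.gen ^ E.commExp g h * (h * g) :=
  (E.exists_mul_eq_zpow_gen_mul_mul g h).choose_spec

lemma commExp_eq_iff {g h : G} {n : ℤ} : E.commExp g h = n ↔ g * h = E.gen ^ n * (h * g) := by
  rw [E.mul_eq_zpow_commExp_mul g h, mul_left_inj]
  exact E.zpow_gen_injective.eq_iff.symm

lemma commExp_mul_left (g g' h : G) : E.commExp (g * g') h = E.commExp g h + E.commExp g' h := by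
  rw [commExp_eq_iff]
  calc g * g' * h = g * (E.gen ^ E.commExp g' h * (h * g')) := by
        rw [← E.mul_eq_zpow_commExp_mul, mul_assoc]
    _ = E.gen ^ E.commExp g' h * (g * h * g') := by
        rw [← mul_assoc, ← E.zpow_gen_mul_comm]
        simp only [mul_assoc]
    _ = E.gen ^ E.commExp g' h * (E.gen ^ E.commExp g h * (h * g) * g') := by
        rw [← E.mul_eq_zpow_commExp_mul g h]
    _ = E.gen ^ (E.commExp g h + E.commExp g' h) * (h * (g * g')) := by
        rw [add_comm, zpow_add]
        simp only [mul_assoc]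

lemma commExp_swap (g h : G) : E.commExp g h = -E.commExp h g := by
  rw [commExp_eq_iff, E.mul_eq_zpow_commExp_mul h g, zpow_neg, inv_mul_cancel_left]

lemma commExp_mul_right (g h h' : G) : E.commExp g (h * h') = E.commExp g h + E.commExp g h' := by
  rw [commExp_swap, commExp_mul_left, E.commExp_swap h, E.commExp_swap h', neg_add, neg_neg,
    neg_neg]

lemma commExp_zpow_gen_left (n : ℤ) (h : G) : E.commExp (E.gen ^ n) h = 0 := by
  rw [commExp_eq_iff, zpow_zero, one_mul, E.zpow_gen_mul_comm]

lemma commExp_congr_left {g g' : G} (hg : E.proj g = E.proj g') (h : G) :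
    E.commExp g h = E.commExp g' h := by
  obtain ⟨n, rfl⟩ := E.exists_eq_zpow_gen_mul_of_proj_eq hg
  rw [commExp_mul_left, commExp_zpow_gen_left, zero_add]

lemma commExp_congr {g g' h h' : G} (hg : E.proj g = E.proj g') (hh : E.proj h = E.proj h') :
    E.commExp g h = E.commExp g' h' := by
  rw [E.commExp_congr_left hg, commExp_swap, E.commExp_congr_left hh, ← commExp_swap]

/-- The bilinear form on `M` induced by the commutator of `G`. -/
noncomputable def commForm : M →ₗ[ℤ] M →ₗ[ℤ] ℤ :=
  let lift := Function.surjInv E.proj_surjective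
  have proj_lift_add (x y : M) : E.proj (lift (x + y)) = E.proj (lift x * lift y) := by
    simp only [lift, E.proj_mul, Function.surjInv_eq]
  (AddMonoidHom.mk' (fun x ↦
    (AddMonoidHom.mk' (fun y ↦ E.commExp (lift x) (lift y)) fun y y' ↦ by
      rw [← commExp_mul_right]
      exact E.commExp_congr rfl (proj_lift_add y y')).toIntLinearMap) fun x x' ↦ by
    ext y
    exact (E.commExp_congr (proj_lift_add x x') rfl).trans
      (E.commExp_mul_left _ _ _)).toIntLinearMap

lemma commForm_proj (g h : G) : E.commForm (E.proj g) (E.proj h) = E.commExp g h :=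
  E.commExp_congr (Function.surjInv_eq _ _) (Function.surjInv_eq _ _)

lemma isAlt_commForm : E.commForm.IsAlt := fun x ↦ by
  obtain ⟨g, rfl⟩ := E.proj_surjective x
  rw [commForm_proj, commExp_eq_iff, zpow_zero, one_mul]

lemma commForm_ne_zero (h : commutator G ≠ ⊥) : E.commForm ≠ 0 := by
  contrapose! h
  refine (commutator_eq_bot_iff G).mpr ⟨⟨fun g g' ↦ ?_⟩⟩
  rw [E.mul_eq_zpow_commExp_mul, ← commForm_proj, h]
  simp

variable {E} {β : M →ₗ[ℤ] M →ₗ[ℤ] ℤ}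

/-- The group law of `G` divided by the cocycle `β`, which is commutative when `β` has the same
antisymmetrization as the cocycle of `G`. -/
abbrev untwistedAddCommGroup (hβ : β - β.flip = E.commForm) : AddCommGroup G :=
  let : Add G := ⟨fun g h ↦ g * h * E.gen ^ (-β (E.proj g) (E.proj h))⟩
  let : Zero G := ⟨1⟩
  let : Neg G := ⟨fun g ↦ g⁻¹ * E.gen ^ (-β (E.proj g) (E.proj g))⟩
  have add_def (g h : G) : g + h = g * h * E.gen ^ (-β (E.proj g) (E.proj h)) := rfl
  have proj_add (g h : G) : E.proj (g + h) = E.proj g + E.proj h := by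
    rw [add_def, E.proj_mul, E.proj_mul, E.proj_zpow_gen, add_zero]
  { AddGroup.ofLeftAxioms
      (fun x y z ↦ by
        rw [add_def (x + y), add_def x (y + z), proj_add, proj_add, add_def, add_def, map_add,
          map_add, LinearMap.add_apply, mul_assoc (x * y), E.zpow_gen_mul_comm]
        simp only [mul_assoc, ← zpow_add]
        ring_nf)
      (fun x ↦ by
        change 1 * x * E.gen ^ (-β (E.proj 1) (E.proj x)) = x
        simp [E.proj_one])
      (fun x ↦ by
        change x⁻¹ * E.gen ^ (-β (E.proj x) (E.proj x)) * x *
          E.gen ^ (-β (E.proj (x⁻¹ * E.gen ^ (-β (E.proj x) (E.proj x)))) (E.proj x)) = 1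
        rw [mul_assoc x⁻¹, E.zpow_gen_mul_comm, E.proj_mul, E.proj_inv, E.proj_zpow_gen]
        simp) with
    add_comm := fun x y ↦ by
      change x * y * E.gen ^ (-β (E.proj x) (E.proj y)) =
        y * x * E.gen ^ (-β (E.proj y) (E.proj x))
      rw [E.mul_eq_zpow_commExp_mul x y, ← commForm_proj, ← hβ, E.zpow_gen_mul_comm, mul_assoc,
        ← zpow_add, LinearMap.sub_apply, LinearMap.sub_apply, LinearMap.flip_apply]
      ring_nf }

lemma exists_section_mul_eq [Module.Projective ℤ M] (hβ : β - β.flip = E.commForm) :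
    ∃ s : M → G, (∀ x, E.proj (s x) = x) ∧ ∀ x y, s x * s y = s (x + y) * E.gen ^ β x y := by
  let := untwistedAddCommGroup hβ
  let projHom : G →+ M := AddMonoidHom.mk' E.proj fun g h ↦ by
    change E.proj (g * h * E.gen ^ (-β (E.proj g) (E.proj h))) = _
    rw [E.proj_mul, E.proj_mul, E.proj_zpow_gen, add_zero]
  obtain ⟨s, hs⟩ := Module.projective_lifting_property projHom.toIntLinearMap LinearMap.id
    E.proj_surjective
  have proj_s : ∀ x, E.proj (s x) = x := LinearMap.congr_fun hs
  refine ⟨s, proj_s, fun x y ↦ ?_⟩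
  have s_add : s (x + y) = s x * s y * E.gen ^ (-β (E.proj (s x)) (E.proj (s y))) := map_add s x y
  rw [s_add, proj_s, proj_s, zpow_neg, inv_mul_cancel_right]

/- The untwisted group is abelian, so its projection onto `M` has a homomorphic section, along which
the cocycle of `G` is `β`. -/
lemma nonempty_mulEquiv_heisenbergGroup [Module.Projective ℤ M]
    (hβ : β - β.flip = E.commForm) : Nonempty (G ≃* HeisenbergGroup β) := by
  obtain ⟨s, proj_s, s_mul⟩ := exists_section_mul_eq hβ
  let toG : HeisenbergGroup β → G := fun x ↦ s x.base * E.gen ^ x.height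
  have toG_mul : ∀ x y, toG (x * y) = toG x * toG y := fun x y ↦ by
    calc toG (x * y) = s (x.base + y.base) * E.gen ^ β x.base y.base *
            (E.gen ^ x.height * E.gen ^ y.height) := by
          rw [mul_assoc, ← zpow_add, ← zpow_add, add_comm (β _ _)]
          rfl
      _ = s x.base * (s y.base * E.gen ^ x.height) * E.gen ^ y.height := by
          rw [← s_mul]
          simp only [mul_assoc]
      _ = toG x * toG y := by
          rw [← E.zpow_gen_mul_comm x.height]
          simp only [toG, mul_assoc]
  have proj_toG : ∀ x, E.proj (toG x) = x.base := fun x ↦ by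
    rw [E.proj_mul, E.proj_zpow_gen, proj_s, add_zero]
  refine ⟨(MulEquiv.ofBijective (MonoidHom.mk' toG toG_mul)
    ⟨fun x y hxy ↦ ?_, fun g ↦ ?_⟩).symm⟩
  · have h_base : x.base = y.base := by rw [← proj_toG, ← proj_toG]; exact congrArg E.proj hxy
    refine HeisenbergGroup.ext h_base (E.zpow_gen_injective (mul_left_cancel (a := s x.base) ?_))
    exact hxy.trans (by simp [toG, h_base])
  · obtain ⟨n, hn⟩ := E.exists_eq_zpow_gen_mul_of_proj_eq (proj_s (E.proj g)).symm
    exact ⟨⟨E.proj g, n⟩, (hn.trans (E.zpow_gen_mul_comm n _)).symm⟩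

end IntCentralExtension

end IntCentralExtension

section Isolator

open scoped commutatorElement

variable {G : Type*} [Group G]

lemma exists_surjective_of_isolated [Group.FG G] {N : Subgroup G} [N.Normal]
    (h_comm : commutator G ≤ N) (h_isolated : ∀ (g : G) (n : ℕ), 0 < n → g ^ n ∈ N → g ∈ N) :
    ∃ (m : ℕ) (π : G → Fin m → ℤ), Function.Surjective π ∧ (∀ g h, π (g * h) = π g + π h) ∧
      ∀ g, π g = 0 ↔ g ∈ N := by
  have h_quot := Subgroup.Normal.quotient_commutative_iff_commutator_le.mpr h_comm
  let : CommGroup (G ⧸ N) := { mul_comm := h_quot.is_comm.comm }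
  have : IsMulTorsionFree (G ⧸ N) := by
    refine .of_not_isOfFinOrder fun x hx h_fin ↦ hx ?_
    obtain ⟨g, rfl⟩ := QuotientGroup.mk_surjective x
    obtain ⟨n, hn, h_pow⟩ := isOfFinOrder_iff_pow_eq_one.mp h_fin
    rw [← QuotientGroup.mk_pow, QuotientGroup.eq_one_iff] at h_pow
    exact (QuotientGroup.eq_one_iff g).mpr (h_isolated g n hn h_pow)
  have : Group.FG (G ⧸ N) := QuotientGroup.fg N
  have : Module.Finite ℤ (Additive (G ⧸ N)) := Module.Finite.iff_addGroup_fg.mpr inferInstance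
  let e := (Module.finBasis ℤ (Additive (G ⧸ N))).equivFun
  refine ⟨_, fun g ↦ e (Additive.ofMul (g : G ⧸ N)),
    e.surjective.comp (Additive.ofMul.surjective.comp QuotientGroup.mk_surjective), fun g h ↦ ?_,
    fun g ↦ ?_⟩
  · simp only [QuotientGroup.mk_mul, ofMul_mul, map_add]
  · rw [LinearEquiv.map_eq_zero_iff, ofMul_eq_zero, QuotientGroup.eq_one_iff]

lemma exists_intCentralExtension_of_isolated [Group.FG G] {c : G} (hc : c ∈ Subgroup.center G)
    (hc_order : ¬IsOfFinOrder c) (h_comm : commutator G ≤ Subgroup.zpowers c)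
    (h_isolated : ∀ (g : G) (n : ℕ), 0 < n → g ^ n ∈ Subgroup.zpowers c → g ∈ Subgroup.zpowers c) :
    ∃ m : ℕ, Nonempty (IntCentralExtension G (Fin m → ℤ)) := by
  have : (Subgroup.zpowers c).Normal :=
    ⟨fun z hz g ↦ by
      rwa [Subgroup.mem_center_iff.mp (Subgroup.zpowers_le.mpr hc hz) g, mul_inv_cancel_right]⟩
  obtain ⟨m, π, hπ_surj, hπ_mul, hπ_ker⟩ := exists_surjective_of_isolated h_comm h_isolated
  exact ⟨m, ⟨{
    proj := π
    proj_mul := hπ_mul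
    proj_surjective := hπ_surj
    gen := c
    gen_commute := fun g ↦ (Subgroup.mem_center_iff.mp hc g).symm
    zpow_gen_injective := injective_zpow_iff_not_isOfFinOrder.mpr hc_order
    proj_eq_zero_iff := hπ_ker }⟩⟩

/- If `z` is the commutator of `h` and `g`, then `h * g ^ n * h⁻¹ = (z * g) ^ n = z ^ n * g ^ n`. -/
lemma mem_center_of_pow_mem_center (h_tf : ∀ (g : G) (n : ℕ), 0 < n → g ^ n = 1 → g = 1)
    (h_comm : commutator G ≤ Subgroup.center G) {g : G} {n : ℕ} (hn : 0 < n)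
    (hg : g ^ n ∈ Subgroup.center G) : g ∈ Subgroup.center G := by
  rw [Subgroup.mem_center_iff] at hg ⊢
  intro h
  have hz : Commute ⁅h, g⁆ g := (Subgroup.mem_center_iff.mp (h_comm
    (Subgroup.commutator_mem_commutator (Subgroup.mem_top h) (Subgroup.mem_top g))) g).symm
  have h_pow : ⁅h, g⁆ ^ n * g ^ n = g ^ n := by
    rw [← hz.mul_pow, commutatorElement_def, inv_mul_cancel_right, conj_pow, hg,
      mul_inv_cancel_right]
  exact commutatorElement_eq_one_iff_mul_comm.mp (h_tf _ n hn (mul_eq_right.mp h_pow))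

end Isolator

/-- On every generalised Heisenberg group there is an automorphism whose twisted
conjugacy growth is `n ^ k * ln n` for some `k`. -/
theorem exists_automorphism_log_growth
    (G : Type*) [Group G]
    (hfg : Group.FG G)
    (htf : ∀ (g : G) (n : ℕ), 0 < n → g ^ n = 1 → g = 1)
    (h2step : commutator G ≤ Subgroup.center G)
    (G2 : Subgroup G) [G2.Normal]
    (hG2 : ∀ g : G, g ∈ G2 ↔ ∃ n : ℕ, 0 < n ∧ g ^ n ∈ commutator G)
    (hcyc : IsCyclic G2) (hinf : Infinite G2) :
    ∃ (ψ : G ≃* G) (k : ℕ), ∀ S : Finset G, Subgroup.closure (S : Set G) = ⊤ →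
      GrowthEquiv (fun n => (twistedGrowth ψ S n : ℝ))
        (fun n => (n : ℝ) ^ k * Real.log n) := by
  obtain ⟨c, rfl⟩ := (Subgroup.isCyclic_iff_exists_zpowers_eq_top G2).mp hcyc
  have hc_order : ¬IsOfFinOrder c := infinite_zpowers.mp (Set.infinite_coe_iff.mp hinf)
  obtain ⟨n, hn, hcn⟩ := (hG2 c).mp (Subgroup.mem_zpowers c)
  have hc : c ∈ Subgroup.center G := mem_center_of_pow_mem_center htf h2step hn (h2step hcn)
  have h_comm : commutator G ≤ Subgroup.zpowers c := fun g hg ↦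
    (hG2 g).mpr ⟨1, one_pos, by rwa [pow_one]⟩
  have h_ne_bot : commutator G ≠ ⊥ := fun h_bot ↦
    hc_order (isOfFinOrder_iff_pow_eq_one.mpr ⟨n, hn, by rwa [h_bot, Subgroup.mem_bot] at hcn⟩)
  have h_isolated : ∀ (g : G) (m : ℕ), 0 < m → g ^ m ∈ Subgroup.zpowers c →
      g ∈ Subgroup.zpowers c := fun g m hm hg ↦ by
    obtain ⟨k, hk, hgk⟩ := (hG2 _).mp hg
    exact (hG2 g).mpr ⟨m * k, Nat.mul_pos hm hk, by rwa [pow_mul]⟩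
  obtain ⟨m, ⟨E⟩⟩ := exists_intCentralExtension_of_isolated hc hc_order h_comm h_isolated
  obtain ⟨P, d, γ, hd, hβ⟩ :=
    exists_orthogonalForm_sub_flip_eq E.isAlt_commForm (E.commForm_ne_zero h_ne_bot)
  obtain ⟨e⟩ := IntCentralExtension.nonempty_mulEquiv_heisenbergGroup hβ
  let ψ := HeisenbergGroup.planeAutomorphism P d γ
  refine ⟨(e.trans ψ).trans e.symm, 2, fun S hS ↦ ?_⟩
  simp only [← twistedGrowth_map]
  exact HeisenbergGroup.growthEquiv_twistedGrowth_planeAutomorphism hd (closure_map_eq_top e hS)
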